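/- Let s ≥ 1. There exists a constant C = C(s) > 0 such that for every N > 1, every V ∈ L¹(S¹), and every (n₁,n₂,n₃,n₄) ∈ Γ₄, one has |Ψ(n₁,n₂,n₃,n₄)| ≤ C ‖V‖_{L¹} m₁^{−2} θ(m₁) θ(m₂) m₃ m₄, where m₁ ≥ m₂ ≥ m₃ ≥ m₄ denotes the decreasing rearrangement of (⟨n₁⟩, ⟨n₂⟩, ⟨n₃⟩, ⟨n₄⟩) with ⟨n⟩ = (1+|n|²)^{1/2}. -/

import Mathlib

open MeasureTheory Filter

noncomputable section

/-- Fourier coefficient on `S¹ = ℝ/2πℤ` (functions on `S¹` are modeled as `2π`-periodic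
functions `ℝ → ℂ`): `f̂(n) = ∫_{S¹} f(x) e^{-inx} dx`. -/
def fourierCoef (f : ℝ → ℂ) (n : ℤ) : ℂ :=
  ∫ x in (0:ℝ)..(2 * Real.pi), f x * Complex.exp (-Complex.I * (n : ℂ) * (x : ℂ))

/-- The Sobolev `H^σ` norm: `(∑_n ⟨n⟩^{2σ} |f̂(n)|²)^{1/2}`, with `⟨n⟩^{2σ} = (1+n²)^σ`. -/
def sobolevNorm (σ : ℝ) (f : ℝ → ℂ) : ℝ :=
  (∑' n : ℤ, (1 + (n : ℝ) ^ 2) ^ σ * ‖fourierCoef f n‖ ^ 2) ^ (1/2 : ℝ)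

/-- `f` is a function on `S¹`, i.e. `2π`-periodic. -/
def Periodic2pi (f : ℝ → ℂ) : Prop := ∀ x, f (x + 2 * Real.pi) = f x

/-- Membership in `H^σ(S¹)`. -/
def InHs (σ : ℝ) (f : ℝ → ℂ) : Prop :=
  Periodic2pi f ∧ Summable (fun n : ℤ => (1 + (n : ℝ) ^ 2) ^ σ * ‖fourierCoef f n‖ ^ 2)

/-- The `L²(S¹)` norm. -/
def L2norm (f : ℝ → ℂ) : ℝ := (∫ x in (0:ℝ)..(2 * Real.pi), ‖f x‖ ^ 2) ^ (1/2 : ℝ)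

/-- The mass `M(f) = ∫_{S¹} |f|² dx`. -/
def massQ (f : ℝ → ℂ) : ℝ := ∫ x in (0:ℝ)..(2 * Real.pi), ‖f x‖ ^ 2

/-- Convolution on `S¹`: `(V∗g)(x) = ∫_{S¹} V(x-y) g(y) dy`. -/
def convP (V : ℝ → ℝ) (g : ℝ → ℂ) (x : ℝ) : ℂ :=
  ∫ y in (0:ℝ)..(2 * Real.pi), (V (x - y) : ℂ) * g y

/-- The `L¹(S¹)` norm of a real-valued `V`. -/
def L1normR (V : ℝ → ℝ) : ℝ := ∫ x in (0:ℝ)..(2 * Real.pi), |V x|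

/-- Spacetime Fourier transform `ũ(n,τ) = ∫_{S¹}∫_ℝ u(x,t) e^{-inx-itτ} dt dx`
(for `u : ℝ → ℝ → ℂ`, time ↦ space ↦ value, `2π`-periodic in space). -/
def spacetimeFourier (u : ℝ → ℝ → ℂ) (n : ℤ) (τ : ℝ) : ℂ :=
  ∫ t : ℝ, ∫ x in (0:ℝ)..(2 * Real.pi),
    u t x * Complex.exp (-Complex.I * ((n : ℂ) * (x : ℂ) + (τ : ℂ) * (t : ℂ)))

/-- The `X^{s,b}` norm: `(∑_n ∫ |ũ(n,τ)|² ⟨n⟩^{2s} ⟨τ-n²⟩^{2b} dτ)^{1/2}`. -/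
def Xnorm (s b : ℝ) (u : ℝ → ℝ → ℂ) : ℝ :=
  (∑' n : ℤ, ∫ τ : ℝ, ‖spacetimeFourier u n τ‖ ^ 2 * (1 + (n : ℝ) ^ 2) ^ s *
    (1 + (τ - (n : ℝ) ^ 2) ^ 2) ^ b) ^ (1/2 : ℝ)

/-- Finiteness of the `X^{s,b}` norm. -/
def XMem (s b : ℝ) (u : ℝ → ℝ → ℂ) : Prop :=
  (∀ n : ℤ, Integrable (fun τ : ℝ => ‖spacetimeFourier u n τ‖ ^ 2 * (1 + (n : ℝ) ^ 2) ^ s *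
    (1 + (τ - (n : ℝ) ^ 2) ^ 2) ^ b)) ∧
  Summable (fun n : ℤ => ∫ τ : ℝ, ‖spacetimeFourier u n τ‖ ^ 2 * (1 + (n : ℝ) ^ 2) ^ s *
    (1 + (τ - (n : ℝ) ^ 2) ^ 2) ^ b)

/-- The multiplier `θ : [0,∞) → ℝ`, `θ(x) = (x/N)^s` for `x ≥ N`, `θ(x) = 1` for `x ≤ N`. -/
def thetaR (s N x : ℝ) : ℝ := if N ≤ x then (x / N) ^ s else 1

/-- `θ(n) := θ(|n|)` for `n ∈ ℤ`. -/
def thetaZ (s N : ℝ) (n : ℤ) : ℝ := thetaR s N |(n : ℝ)|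

/-- `E¹(f) = ‖𝒟f‖²_{L²(S¹)}`, computed via Plancherel:
`‖𝒟f‖²_{L²} = (1/2π) ∑_n θ(n)² |f̂(n)|²`. -/
def E1 (s N : ℝ) (f : ℝ → ℂ) : ℝ :=
  (1 / (2 * Real.pi)) * ∑' n : ℤ, (thetaZ s N n) ^ 2 * ‖fourierCoef f n‖ ^ 2

/-- `‖𝒟f‖_{L²(S¹)}`. -/
def DL2 (s N : ℝ) (f : ℝ → ℂ) : ℝ := (E1 s N f) ^ (1/2 : ℝ)

/-- `‖𝒟u‖_{X^{0,b}}`, where `𝒟` is the Fourier multiplier with symbol `θ(n)`. -/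
def DXnorm (s N b : ℝ) (u : ℝ → ℝ → ℂ) : ℝ :=
  (∑' n : ℤ, ∫ τ : ℝ, (thetaZ s N n) ^ 2 * ‖spacetimeFourier u n τ‖ ^ 2 *
    (1 + (τ - (n : ℝ) ^ 2) ^ 2) ^ b) ^ (1/2 : ℝ)

/-- The Japanese bracket `⟨n⟩ = (1+|n|²)^{1/2}`. -/
def jb (n : ℤ) : ℝ := Real.sqrt (1 + (n : ℝ) ^ 2)

/-- The multiplier `Ψ` on `Γ₄` for the Hartree higher modified energy. -/
def PsiV (s N : ℝ) (V : ℝ → ℝ) (n₁ n₂ n₃ n₄ : ℤ) : ℂ :=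
  if n₁ ^ 2 - n₂ ^ 2 + n₃ ^ 2 - n₄ ^ 2 ≠ 0 then
    (((thetaZ s N n₁) ^ 2 - (thetaZ s N n₂) ^ 2 + (thetaZ s N n₃) ^ 2 - (thetaZ s N n₄) ^ 2 : ℝ) : ℂ) *
      fourierCoef (fun x => (V x : ℂ)) (n₃ + n₄) /
      ((n₁ ^ 2 - n₂ ^ 2 + n₃ ^ 2 - n₄ ^ 2 : ℤ) : ℂ)
  else 0

/-- The multiplier `Ψ₂` on `Γ₄` for the higher modified energy of the cubic NLS with potential. -/
def Psi2 (s N : ℝ) (n₁ n₂ n₃ n₄ : ℤ) : ℂ :=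
  if n₁ ^ 2 - n₂ ^ 2 + n₃ ^ 2 - n₄ ^ 2 ≠ 0 then
    (((thetaZ s N n₁) ^ 2 - (thetaZ s N n₂) ^ 2 + (thetaZ s N n₃) ^ 2 - (thetaZ s N n₄) ^ 2 : ℝ) : ℂ) /
      ((n₁ ^ 2 - n₂ ^ 2 + n₃ ^ 2 - n₄ ^ 2 : ℤ) : ℂ)
  else 0

/-- The quadrilinear functional `λ₄(M;f)`, summed over `Γ₄ = {n₁+n₂+n₃+n₄ = 0}`
(parametrized by `(n₁,n₂,n₃)`, with `n₄ = -(n₁+n₂+n₃)`). -/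
def lambda4 (M : ℤ → ℤ → ℤ → ℤ → ℂ) (f : ℝ → ℂ) : ℂ :=
  ∑' p : ℤ × ℤ × ℤ,
    M p.1 p.2.1 p.2.2 (-(p.1 + p.2.1 + p.2.2)) * fourierCoef f p.1 *
      (starRingEnd ℂ) (fourierCoef f (-p.2.1)) * fourierCoef f p.2.2 *
      (starRingEnd ℂ) (fourierCoef f (p.1 + p.2.1 + p.2.2))

/-- `u` is a (global-in-time) solution of the defocusing periodic NLS
`i∂_t u + ∂_x² u = |u|^{2k} u` on `S¹ × ℝ`. -/
def IsSolutionNLS (k : ℕ) (u : ℝ → ℝ → ℂ) : Prop :=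
  (∀ t, Periodic2pi (u t)) ∧
  ∀ t x, Complex.I * deriv (fun t' => u t' x) t + deriv (deriv (u t)) x =
    ((‖u t x‖ : ℝ) : ℂ) ^ (2 * k) * u t x

/-- The conserved energy for the degree `2k+1` NLS. -/
def energyNLS (k : ℕ) (f : ℝ → ℂ) : ℝ :=
  (1/2) * (∫ x in (0:ℝ)..(2 * Real.pi), ‖deriv f x‖ ^ 2) +
    (1 / (2 * (k : ℝ) + 2)) * (∫ x in (0:ℝ)..(2 * Real.pi), ‖f x‖ ^ (2 * k + 2))

/-- `u` is a (global-in-time) solution of the periodic Hartree equation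
`i∂_t u + ∂_x² u = (V∗|u|²)u` on `S¹ × ℝ`. -/
def IsSolutionHartree (V : ℝ → ℝ) (u : ℝ → ℝ → ℂ) : Prop :=
  (∀ t, Periodic2pi (u t)) ∧
  ∀ t x, Complex.I * deriv (fun t' => u t' x) t + deriv (deriv (u t)) x =
    convP V (fun y => ((‖u t y‖ ^ 2 : ℝ) : ℂ)) x * u t x

/-- The conserved energy for the Hartree equation. -/
def energyHartree (V : ℝ → ℝ) (f : ℝ → ℂ) : ℝ :=
  (1/2) * (∫ x in (0:ℝ)..(2 * Real.pi), ‖deriv f x‖ ^ 2) +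
    (1/4) * (∫ x in (0:ℝ)..(2 * Real.pi),
      (convP V (fun y => ((‖f y‖ ^ 2 : ℝ) : ℂ)) x).re * ‖f x‖ ^ 2)

/-- `u` is a (global-in-time) solution of the cubic NLS with potential
`i∂_t u + ∂_x² u = |u|²u + λ(x)u` on `S¹ × ℝ`. -/
def IsSolutionPotNLS (lam : ℝ → ℝ) (u : ℝ → ℝ → ℂ) : Prop :=
  (∀ t, Periodic2pi (u t)) ∧
  ∀ t x, Complex.I * deriv (fun t' => u t' x) t + deriv (deriv (u t)) x =
    ((‖u t x‖ ^ 2 : ℝ) : ℂ) * u t x + ((lam x : ℝ) : ℂ) * u t x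

/-- The conserved energy for the cubic NLS with potential. -/
def energyPotNLS (lam : ℝ → ℝ) (f : ℝ → ℂ) : ℝ :=
  (1/2) * (∫ x in (0:ℝ)..(2 * Real.pi), ‖deriv f x‖ ^ 2) +
    (1/4) * (∫ x in (0:ℝ)..(2 * Real.pi), ‖f x‖ ^ 4) +
    (1/2) * (∫ x in (0:ℝ)..(2 * Real.pi), lam x * ‖f x‖ ^ 2)

/-- `u` is a (global-in-time) solution of the cubic NLS with inhomogeneous nonlinearity
`i∂_t u + ∂_x² u = λ(x)|u|²u` on `S¹ × ℝ`. -/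
def IsSolutionInhomNLS (lam : ℝ → ℝ) (u : ℝ → ℝ → ℂ) : Prop :=
  (∀ t, Periodic2pi (u t)) ∧
  ∀ t x, Complex.I * deriv (fun t' => u t' x) t + deriv (deriv (u t)) x =
    ((lam x : ℝ) : ℂ) * ((‖u t x‖ ^ 2 : ℝ) : ℂ) * u t x

/-- The conserved energy for the cubic NLS with inhomogeneous nonlinearity. -/
def energyInhomNLS (lam : ℝ → ℝ) (f : ℝ → ℂ) : ℝ :=
  (1/2) * (∫ x in (0:ℝ)..(2 * Real.pi), ‖deriv f x‖ ^ 2) +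
    (1/4) * (∫ x in (0:ℝ)..(2 * Real.pi), lam x * ‖f x‖ ^ 4)

/-- The Hartree higher modified energy `E²(f) = E¹(f) + λ₄(Ψ;f)`. -/
def E2H (s N : ℝ) (V : ℝ → ℝ) (f : ℝ → ℂ) : ℂ :=
  (E1 s N f : ℂ) + lambda4 (PsiV s N V) f

/-- The Hartree higher modified energy with multiplier `cΨ`:
`E²(f) = E¹(f) + λ₄(cΨ;f)`. -/
def E2Hc (s N : ℝ) (V : ℝ → ℝ) (c : ℝ) (f : ℝ → ℂ) : ℂ :=
  (E1 s N f : ℂ) + lambda4 (fun a b c' d => (c : ℂ) * PsiV s N V a b c' d) f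

/-- The higher modified energy with multiplier `cΨ₂` for the cubic NLS with potential:
`E²(f) = E¹(f) + λ₄(cΨ₂;f)`. -/
def E2Pc (s N c : ℝ) (f : ℝ → ℂ) : ℂ :=
  (E1 s N f : ℂ) + lambda4 (fun a b c' d => (c : ℂ) * Psi2 s N a b c' d) f

end

/-!
Write `a = n₁ + n₂` and `b = n₁ + n₄`. On `Γ₄` the denominator of `Ψ` equals `2ab`. The numerator
is `(θ(n₁)² - θ(n₂)²) + (θ(n₃)² - θ(n₄)²)` with `|n₃ + n₄| = |a|`, so the mean value theorem for
`t ↦ t ^ (2s)`, whose derivative is nondecreasing once `s ≥ 1/2`, bounds it by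
`4s θ(m₁)² |a| / m₁`; pairing `n₁` with `n₄` instead gives the same bound with `b`. The quotient is
therefore at most a constant times `θ(m₁)² / (m₁ max(|a|, |b|))`. Any two brackets differ by at most
`|a| + |b|`, hence `m₁ ≤ m₄ + |a| + |b| ≤ 3 m₄ max(|a|, |b|)`, which produces the second power of
`m₁`. Finally `m₁ ≤ 3 m₂` yields `θ(m₁) ≤ 3 ^ s θ(m₂)`.
-/

theorem norm_fourierCoef_le (f : ℝ → ℂ) (n : ℤ) :
    ‖fourierCoef f n‖ ≤ ∫ x in (0 : ℝ)..(2 * Real.pi), ‖f x‖ := by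
  refine (intervalIntegral.norm_integral_le_integral_norm (by positivity)).trans_eq ?_
  refine intervalIntegral.integral_congr fun x _ => ?_
  have hphase : -Complex.I * (n : ℂ) * (x : ℂ) = ((-(n * x) : ℝ) : ℂ) * Complex.I := by
    push_cast
    ring
  simp only [norm_mul, hphase, Complex.norm_exp_ofReal_mul_I, mul_one]

theorem norm_fourierCoef_ofReal_le (V : ℝ → ℝ) (n : ℤ) :
    ‖fourierCoef (fun x => (V x : ℂ)) n‖ ≤ L1normR V := by
  simpa only [L1normR, Complex.norm_real, Real.norm_eq_abs] using
    norm_fourierCoef_le (fun x => (V x : ℂ)) n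

theorem L1normR_nonneg (V : ℝ → ℝ) : 0 ≤ L1normR V :=
  intervalIntegral.integral_nonneg (by positivity) fun _ _ => abs_nonneg _

theorem jb_eq_norm (n : ℤ) : jb n = ‖1 + (n : ℂ) * Complex.I‖ := by
  simpa [jb] using (Complex.norm_add_mul_I 1 (n : ℝ)).symm

theorem one_le_jb (n : ℤ) : 1 ≤ jb n :=
  Real.one_le_sqrt.mpr (le_add_of_nonneg_right (sq_nonneg _))

theorem abs_le_jb (n : ℤ) : |(n : ℝ)| ≤ jb n :=
  Real.abs_le_sqrt (le_add_of_nonneg_left zero_le_one)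

theorem jb_abs (n : ℤ) : jb |n| = jb n := by
  simp [jb]

theorem jb_sub_jb_le (x y : ℤ) : jb x - jb y ≤ |(x : ℝ) - y| := by
  calc jb x - jb y ≤ ‖(1 + (x : ℂ) * Complex.I) - (1 + (y : ℂ) * Complex.I)‖ := by
        rw [jb_eq_norm, jb_eq_norm]
        exact norm_sub_norm_le _ _
    _ = |(x : ℝ) - y| := by
        rw [add_sub_add_left_eq_sub, ← sub_mul, norm_mul, Complex.norm_I, mul_one,
          ← Int.cast_sub, Complex.norm_intCast, Int.cast_sub]

theorem jb_add_le (x y : ℤ) : jb (x + y) ≤ jb x + jb y := by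
  have h := jb_sub_jb_le (x + y) x
  rw [Int.cast_add, add_sub_cancel_left] at h
  linarith [abs_le_jb y]

theorem jb_neg (n : ℤ) : jb (-n) = jb n := by
  simp [jb]

theorem two_mul_jb_le_sum {S : Multiset ℤ} (hsum : S.sum = 0) (hcard : 1 < S.card) {k : ℤ}
    (hk : k ∈ S) : 2 * jb k ≤ (S.map jb).sum := by
  obtain ⟨T, rfl⟩ := Multiset.exists_cons_of_mem hk
  have hT : T ≠ ∅ := by
    rintro rfl
    simp at hcard
  have hkT : jb k = jb T.sum := by
    rw [Multiset.sum_cons] at hsum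
    rw [eq_neg_of_add_eq_zero_left hsum, jb_neg]
  have := Multiset.le_sum_nonempty_of_subadditive jb jb_add_le T hT
  rw [Multiset.map_cons, Multiset.sum_cons]
  linarith

section PairSums

variable {n₁ n₂ n₃ n₄ : ℤ}

/- Adjacent vertices of the parallelogram `n₁, -n₂, n₃, -n₄` differ by `±(n₁ + n₂)` or
`±(n₁ + n₄)`, opposite ones by a sum or a difference of the two. -/
theorem abs_abs_sub_abs_le_of_mem (h : n₁ + n₂ + n₃ + n₄ = 0) {k l : ℤ}
    (hk : k ∈ ({n₁, n₂, n₃, n₄} : Multiset ℤ)) (hl : l ∈ ({n₁, n₂, n₃, n₄} : Multiset ℤ)) :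
    |(|k| - |l|)| ≤ |n₁ + n₂| + |n₁ + n₄| := by
  simp only [Multiset.insert_eq_cons, Multiset.mem_cons, Multiset.mem_singleton] at hk hl
  simp only [Int.abs_eq_natAbs]
  omega

theorem jb_le_jb_add_of_mem (h : n₁ + n₂ + n₃ + n₄ = 0) {k l : ℤ}
    (hk : k ∈ ({n₁, n₂, n₃, n₄} : Multiset ℤ)) (hl : l ∈ ({n₁, n₂, n₃, n₄} : Multiset ℤ)) :
    jb k ≤ jb l + (|(n₁ : ℝ) + n₂| + |(n₁ : ℝ) + n₄|) := by
  have hlip := jb_sub_jb_le |k| |l|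
  have hspan : |((|k| : ℤ) : ℝ) - (|l| : ℤ)| ≤ |(n₁ : ℝ) + n₂| + |(n₁ : ℝ) + n₄| := by
    exact_mod_cast abs_abs_sub_abs_le_of_mem h hk hl
  rw [jb_abs, jb_abs] at hlip
  linarith

end PairSums

section DecreasingRearrangement

variable {S : Multiset ℤ} {m₁ m₂ m₃ m₄ : ℝ}

theorem exists_jb_eq_of_rearrangement (hm : {m₁, m₂, m₃, m₄} = S.map jb) {x : ℝ}
    (hx : x ∈ ({m₁, m₂, m₃, m₄} : Multiset ℝ)) : ∃ k ∈ S, jb k = x :=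
  Multiset.mem_map.mp (hm ▸ hx)

theorem jb_le_of_rearrangement (h43 : m₄ ≤ m₃) (h32 : m₃ ≤ m₂) (h21 : m₂ ≤ m₁)
    (hm : {m₁, m₂, m₃, m₄} = S.map jb) {k : ℤ} (hk : k ∈ S) : jb k ≤ m₁ := by
  have hmem : jb k ∈ ({m₁, m₂, m₃, m₄} : Multiset ℝ) := hm ▸ Multiset.mem_map_of_mem jb hk
  simp only [Multiset.insert_eq_cons, Multiset.mem_cons, Multiset.mem_singleton] at hmem
  rcases hmem with h | h | h | h <;> linarith

theorem le_three_mul_of_rearrangement (h43 : m₄ ≤ m₃) (h32 : m₃ ≤ m₂) (hsum : S.sum = 0)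
    (hm : {m₁, m₂, m₃, m₄} = S.map jb) : m₁ ≤ 3 * m₂ := by
  obtain ⟨k, hk, rfl⟩ := exists_jb_eq_of_rearrangement hm (x := m₁) (by simp)
  have hcard : S.card = 4 := by simpa using (congrArg Multiset.card hm).symm
  have htwo := two_mul_jb_le_sum hsum (by omega) hk
  simp only [← hm, Multiset.insert_eq_cons, Multiset.sum_cons, Multiset.sum_singleton] at htwo
  linarith

theorem one_le_of_rearrangement (hm : {m₁, m₂, m₃, m₄} = S.map jb) : 1 ≤ m₄ := by
  obtain ⟨l, -, rfl⟩ := exists_jb_eq_of_rearrangement hm (x := m₄) (by simp)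
  exact one_le_jb l

theorem le_add_of_rearrangement {n₁ n₂ n₃ n₄ : ℤ} (h : n₁ + n₂ + n₃ + n₄ = 0)
    (hm : {m₁, m₂, m₃, m₄} = ({n₁, n₂, n₃, n₄} : Multiset ℤ).map jb) :
    m₁ ≤ m₄ + (|(n₁ : ℝ) + n₂| + |(n₁ : ℝ) + n₄|) := by
  obtain ⟨k, hk, rfl⟩ := exists_jb_eq_of_rearrangement hm (x := m₁) (by simp)
  obtain ⟨l, hl, rfl⟩ := exists_jb_eq_of_rearrangement hm (x := m₄) (by simp)
  exact jb_le_jb_add_of_mem h hk hl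

end DecreasingRearrangement

theorem abs_rpow_sub_rpow_le {p K u v : ℝ} (hp : 1 ≤ p) (hu : 0 ≤ u) (huK : u ≤ K)
    (hv : 0 ≤ v) (hvK : v ≤ K) : |u ^ p - v ^ p| ≤ p * K ^ (p - 1) * |u - v| := by
  have hderiv_le : ∀ x ∈ Set.Icc 0 K, ‖p * x ^ (p - 1)‖ ≤ p * K ^ (p - 1) := fun x hx => by
    obtain ⟨hx0, hxK⟩ := hx
    rw [Real.norm_of_nonneg (by positivity)]
    gcongr
  exact (convex_Icc 0 K).norm_image_sub_le_of_norm_hasDerivWithin_le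
    (fun x _ => (Real.hasDerivAt_rpow_const (Or.inr hp)).hasDerivWithinAt) hderiv_le
    ⟨hv, hvK⟩ ⟨hu, huK⟩

section Theta

variable {s p N M x y : ℝ}

theorem thetaR_eq_max_rpow (hN : 0 < N) : thetaR s N x = max 1 (x / N) ^ s := by
  unfold thetaR
  split_ifs with h
  · rw [max_eq_right ((one_le_div hN).mpr h)]
  · rw [max_eq_left ((div_le_one hN).mpr (not_le.mp h).le), Real.one_rpow]

theorem thetaR_nonneg (hN : 0 < N) : 0 ≤ thetaR s N x := by
  rw [thetaR_eq_max_rpow hN]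
  positivity

theorem sq_thetaR (hN : 0 < N) : thetaR s N x ^ 2 = thetaR (2 * s) N x := by
  rw [thetaR_eq_max_rpow hN, thetaR_eq_max_rpow hN, mul_comm, Real.rpow_mul (by positivity),
    Real.rpow_two]

theorem thetaR_le_rpow_mul_thetaR {c : ℝ} (hs : 0 ≤ s) (hN : 0 < N) (hc : 1 ≤ c)
    (hxy : x ≤ c * y) : thetaR s N x ≤ c ^ s * thetaR s N y := by
  have hmax : max 1 (x / N) ≤ c * max 1 (y / N) := by
    refine max_le (one_le_mul_of_one_le_of_one_le hc (le_max_left _ _)) ?_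
    calc x / N ≤ c * y / N := by gcongr
      _ = c * (y / N) := mul_div_assoc _ _ _
      _ ≤ c * max 1 (y / N) := by gcongr; exact le_max_right _ _
  rw [thetaR_eq_max_rpow hN, thetaR_eq_max_rpow hN, ← Real.mul_rpow (by positivity) (by positivity)]
  gcongr

theorem abs_thetaR_sub_thetaR_le (hp : 1 ≤ p) (hN : 0 < N) (hM : 0 < M) (hx : x ≤ M)
    (hy : y ≤ M) : |thetaR p N x - thetaR p N y| ≤ p * thetaR p N M / M * |x - y| := by
  simp only [thetaR_eq_max_rpow hN]
  set K := max 1 (M / N)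
  have hK : 0 < K := by positivity
  have hKM : K⁻¹ ≤ N / M := by
    rw [← inv_div]
    exact inv_anti₀ (by positivity) (le_max_right _ _)
  have hle : ∀ t ≤ M, max 1 (t / N) ≤ K := fun t ht => max_le_max_left 1 (by gcongr)
  have hdiff : |max 1 (x / N) - max 1 (y / N)| ≤ |x - y| / N := by
    rw [max_comm 1, max_comm 1]
    refine (abs_max_sub_max_le_abs _ _ _).trans_eq ?_
    rw [← sub_div, abs_div, abs_of_pos hN]
  calc |max 1 (x / N) ^ p - max 1 (y / N) ^ p|
      ≤ p * K ^ (p - 1) * |max 1 (x / N) - max 1 (y / N)| :=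
        abs_rpow_sub_rpow_le hp (by positivity) (hle x hx) (by positivity) (hle y hy)
    _ ≤ p * K ^ (p - 1) * (|x - y| / N) := by gcongr
    _ = p * K ^ p * K⁻¹ * (|x - y| / N) := by
        rw [Real.rpow_sub_one hK.ne']
        ring
    _ ≤ p * K ^ p * (N / M) * (|x - y| / N) := by gcongr
    _ = p * K ^ p / M * |x - y| := by field_simp

theorem abs_sq_thetaZ_sub_sq_thetaZ_le (hs : 1 / 2 ≤ s) (hN : 0 < N) (hM : 0 < M) {k l : ℤ}
    (hk : |(k : ℝ)| ≤ M) (hl : |(l : ℝ)| ≤ M) :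
    |thetaZ s N k ^ 2 - thetaZ s N l ^ 2| ≤ 2 * s * thetaR s N M ^ 2 / M * |(k : ℝ) + l| := by
  simp only [thetaZ, sq_thetaR hN]
  have hθ : 0 ≤ thetaR (2 * s) N M := thetaR_nonneg hN
  have hdist : |(|(k : ℝ)| - |(l : ℝ)|)| ≤ |(k : ℝ) + l| := by
    simpa only [abs_neg, sub_neg_eq_add] using abs_abs_sub_abs_le (k : ℝ) (-l)
  calc |(thetaR (2 * s) N |(k : ℝ)| - thetaR (2 * s) N |(l : ℝ)|)|
      ≤ 2 * s * thetaR (2 * s) N M / M * |(|(k : ℝ)| - |(l : ℝ)|)| :=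
        abs_thetaR_sub_thetaR_le (by linarith) hN hM hk hl
    _ ≤ 2 * s * thetaR (2 * s) N M / M * |(k : ℝ) + l| :=
        mul_le_mul_of_nonneg_left hdist (by positivity)

theorem abs_alternating_sq_thetaZ_le (hs : 1 / 2 ≤ s) (hN : 0 < N) (hM : 0 < M)
    {n₁ n₂ n₃ n₄ : ℤ} (h : n₁ + n₂ + n₃ + n₄ = 0) (h₁ : |(n₁ : ℝ)| ≤ M) (h₂ : |(n₂ : ℝ)| ≤ M)
    (h₃ : |(n₃ : ℝ)| ≤ M) (h₄ : |(n₄ : ℝ)| ≤ M) :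
    |thetaZ s N n₁ ^ 2 - thetaZ s N n₂ ^ 2 + thetaZ s N n₃ ^ 2 - thetaZ s N n₄ ^ 2| ≤
      4 * s * thetaR s N M ^ 2 / M * |(n₁ : ℝ) + n₂| := by
  have h34 : |(n₃ : ℝ) + n₄| = |(n₁ : ℝ) + n₂| := by
    have : (n₃ : ℝ) + n₄ = -(n₁ + n₂) := by
      exact_mod_cast (by linarith : n₃ + n₄ = -(n₁ + n₂))
    rw [this, abs_neg]
  calc |thetaZ s N n₁ ^ 2 - thetaZ s N n₂ ^ 2 + thetaZ s N n₃ ^ 2 - thetaZ s N n₄ ^ 2|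
      ≤ |thetaZ s N n₁ ^ 2 - thetaZ s N n₂ ^ 2| + |thetaZ s N n₃ ^ 2 - thetaZ s N n₄ ^ 2| := by
        rw [add_sub_assoc]
        exact abs_add_le _ _
    _ ≤ 2 * s * thetaR s N M ^ 2 / M * |(n₁ : ℝ) + n₂| +
          2 * s * thetaR s N M ^ 2 / M * |(n₃ : ℝ) + n₄| :=
        add_le_add (abs_sq_thetaZ_sub_sq_thetaZ_le hs hN hM h₁ h₂)
          (abs_sq_thetaZ_sub_sq_thetaZ_le hs hN hM h₃ h₄)
    _ = 4 * s * thetaR s N M ^ 2 / M * |(n₁ : ℝ) + n₂| := by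
        rw [h34]
        ring

end Theta

theorem resonance_eq_mul {R : Type*} [CommRing R] {n₁ n₂ n₃ n₄ : R}
    (h : n₁ + n₂ + n₃ + n₄ = 0) :
    n₁ ^ 2 - n₂ ^ 2 + n₃ ^ 2 - n₄ ^ 2 = 2 * (n₁ + n₂) * (n₁ + n₄) := by
  linear_combination (n₃ - n₁ - n₂ - n₄) * h

theorem norm_PsiV_eq (s N : ℝ) (V : ℝ → ℝ) {n₁ n₂ n₃ n₄ : ℤ} (h : n₁ + n₂ + n₃ + n₄ = 0) :
    ‖PsiV s N V n₁ n₂ n₃ n₄‖ =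
      |thetaZ s N n₁ ^ 2 - thetaZ s N n₂ ^ 2 + thetaZ s N n₃ ^ 2 - thetaZ s N n₄ ^ 2| /
          (|(n₁ : ℝ) + n₂| * |(n₁ : ℝ) + n₄|) *
        ‖fourierCoef (fun x => (V x : ℂ)) (n₃ + n₄)‖ / 2 := by
  -- On resonant frequencies the denominator vanishes and both sides are `0`.
  have hite : ∀ (z : ℂ) (d : ℤ), (if d ≠ 0 then z / d else 0) = z / d := fun z d => by
    split_ifs with hd <;> simp_all
  rw [PsiV, hite, resonance_eq_mul h, norm_div, norm_mul, Complex.norm_real, Real.norm_eq_abs,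
    Complex.norm_intCast]
  push_cast
  rw [abs_mul, abs_mul, abs_two]
  ring

theorem div_abs_mul_abs_le {A M X μ : ℝ} {a b : ℤ} (hA : 0 ≤ A) (hM : 0 < M)
    (hXa : X ≤ A / M * |(a : ℝ)|) (hXb : X ≤ A / M * |(b : ℝ)|) (hμ : 1 ≤ μ)
    (hMab : M ≤ μ + (|(a : ℝ)| + |(b : ℝ)|)) :
    X / (|(a : ℝ)| * |(b : ℝ)|) ≤ 3 * A * μ / M ^ 2 := by
  wlog hab : |(a : ℝ)| ≤ |(b : ℝ)| generalizing a b
  · rw [mul_comm |(a : ℝ)|]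
    exact this hXb hXa (by linarith) (not_le.mp hab).le
  rcases eq_or_ne a 0 with rfl | ha
  · rw [Int.cast_zero, abs_zero, zero_mul, div_zero]
    positivity
  have ha1 : 1 ≤ |(a : ℝ)| := by exact_mod_cast Int.one_le_abs ha
  have hb1 : 1 ≤ |(b : ℝ)| := ha1.trans hab
  have hM_le : M ≤ 3 * |(b : ℝ)| * μ := by nlinarith
  rw [div_le_div_iff₀ (by positivity) (by positivity)]
  calc X * M ^ 2 ≤ A / M * |(a : ℝ)| * M ^ 2 := by gcongr
    _ = A * |(a : ℝ)| * M := by field_simp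
    _ ≤ A * |(a : ℝ)| * (3 * |(b : ℝ)| * μ) := by gcongr
    _ = 3 * A * μ * (|(a : ℝ)| * |(b : ℝ)|) := by ring

theorem norm_PsiV_le {s N M μ : ℝ} (hs : 1 / 2 ≤ s) (hN : 0 < N) (hM : 0 < M) (hμ : 1 ≤ μ)
    (V : ℝ → ℝ) {n₁ n₂ n₃ n₄ : ℤ} (h : n₁ + n₂ + n₃ + n₄ = 0)
    (hn : ∀ k ∈ ({n₁, n₂, n₃, n₄} : Multiset ℤ), |(k : ℝ)| ≤ M)
    (hspan : M ≤ μ + (|(n₁ : ℝ) + n₂| + |(n₁ : ℝ) + n₄|)) :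
    ‖PsiV s N V n₁ n₂ n₃ n₄‖ ≤ 6 * s * L1normR V * thetaR s N M ^ 2 * μ / M ^ 2 := by
  rw [norm_PsiV_eq s N V h]
  set X := thetaZ s N n₁ ^ 2 - thetaZ s N n₂ ^ 2 + thetaZ s N n₃ ^ 2 - thetaZ s N n₄ ^ 2
  have h₁ := hn n₁ (by simp)
  have h₂ := hn n₂ (by simp)
  have h₃ := hn n₃ (by simp)
  have h₄ := hn n₄ (by simp)
  have hX₁₂ : |X| ≤ 4 * s * thetaR s N M ^ 2 / M * |(n₁ : ℝ) + n₂| :=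
    abs_alternating_sq_thetaZ_le hs hN hM h h₁ h₂ h₃ h₄
  have hX₁₄ : |X| ≤ 4 * s * thetaR s N M ^ 2 / M * |(n₁ : ℝ) + n₄| := by
    convert abs_alternating_sq_thetaZ_le hs hN hM
      (show n₁ + n₄ + n₃ + n₂ = 0 by linarith) h₁ h₄ h₃ h₂ using 2
    ring
  have hquot : |X| / (|(n₁ : ℝ) + n₂| * |(n₁ : ℝ) + n₄|) ≤
      3 * (4 * s * thetaR s N M ^ 2) * μ / M ^ 2 := by
    simp only [← Int.cast_add] at hX₁₂ hX₁₄ hspan ⊢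
    exact div_abs_mul_abs_le (by positivity) hM hX₁₂ hX₁₄ hμ hspan
  calc |X| / (|(n₁ : ℝ) + n₂| * |(n₁ : ℝ) + n₄|) *
        ‖fourierCoef (fun x => (V x : ℂ)) (n₃ + n₄)‖ / 2
      ≤ 3 * (4 * s * thetaR s N M ^ 2) * μ / M ^ 2 * L1normR V / 2 := by
        gcongr
        exact norm_fourierCoef_ofReal_le V _
    _ = 6 * s * L1normR V * thetaR s N M ^ 2 * μ / M ^ 2 := by ring

theorem Psi_pointwise_bound_general (s : ℝ) (hs : 1 / 2 ≤ s) :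
    ∃ C : ℝ, 0 < C ∧ ∀ N : ℝ, 0 < N → ∀ V : ℝ → ℝ,
      (∀ x, V (x + 2 * Real.pi) = V x) →
      IntervalIntegrable V volume 0 (2 * Real.pi) →
      ∀ n₁ n₂ n₃ n₄ : ℤ, n₁ + n₂ + n₃ + n₄ = 0 →
      ∀ m₁ m₂ m₃ m₄ : ℝ, m₄ ≤ m₃ → m₃ ≤ m₂ → m₂ ≤ m₁ →
        ({m₁, m₂, m₃, m₄} : Multiset ℝ) = {jb n₁, jb n₂, jb n₃, jb n₄} →
        ‖PsiV s N V n₁ n₂ n₃ n₄‖ ≤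
          C * L1normR V * m₁ ^ (-(2:ℝ)) * thetaR s N m₁ * thetaR s N m₂ * m₃ * m₄ := by
  refine ⟨6 * s * 3 ^ s, by positivity, ?_⟩
  intro N hN V _ _ n₁ n₂ n₃ n₄ h m₁ m₂ m₃ m₄ h43 h32 h21 hm
  replace hm : {m₁, m₂, m₃, m₄} = ({n₁, n₂, n₃, n₄} : Multiset ℤ).map jb := hm
  have hm₄ : 1 ≤ m₄ := one_le_of_rearrangement hm
  have hm₁ : 0 < m₁ := by linarith
  have hm₂ : m₁ ≤ 3 * m₂ :=
    le_three_mul_of_rearrangement h43 h32 (by simpa [add_assoc] using h) hm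
  have hV := L1normR_nonneg V
  have hθ₁ : 0 ≤ thetaR s N m₁ := thetaR_nonneg hN
  have hθ₂ : 0 ≤ thetaR s N m₂ := thetaR_nonneg hN
  have hθ : thetaR s N m₁ ≤ 3 ^ s * thetaR s N m₂ :=
    thetaR_le_rpow_mul_thetaR (by linarith) hN (by norm_num) hm₂
  calc ‖PsiV s N V n₁ n₂ n₃ n₄‖
      ≤ 6 * s * L1normR V * thetaR s N m₁ ^ 2 * m₄ / m₁ ^ 2 :=
        norm_PsiV_le hs hN hm₁ hm₄ V h
          (fun k hk => (abs_le_jb k).trans (jb_le_of_rearrangement h43 h32 h21 hm hk))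
          (le_add_of_rearrangement h hm)
    _ ≤ 6 * s * L1normR V * (thetaR s N m₁ * (3 ^ s * thetaR s N m₂)) * (m₃ * m₄) / m₁ ^ 2 := by
        rw [sq (thetaR s N m₁)]
        gcongr
        exact le_mul_of_one_le_left (by positivity) (hm₄.trans h43)
    _ = 6 * s * 3 ^ s * L1normR V * m₁ ^ (-(2:ℝ)) * thetaR s N m₁ * thetaR s N m₂ * m₃ * m₄ := by
        rw [Real.rpow_neg hm₁.le, Real.rpow_two]
        ring

/-- Lemma 4.2: pointwise bound on the multiplier `Ψ`:
`|Ψ| ≤ C‖V‖_{L¹} m₁^{-2} θ(m₁)θ(m₂) m₃ m₄` on `Γ₄`, where `m₁ ≥ m₂ ≥ m₃ ≥ m₄` is the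
decreasing rearrangement of the Japanese brackets `⟨n₁⟩,…,⟨n₄⟩`. -/
theorem Psi_pointwise_bound (s : ℝ) (hs : 1 ≤ s) :
    ∃ C : ℝ, 0 < C ∧ ∀ N : ℝ, 1 < N → ∀ V : ℝ → ℝ,
      (∀ x, V (x + 2 * Real.pi) = V x) →
      IntervalIntegrable V volume 0 (2 * Real.pi) →
      ∀ n₁ n₂ n₃ n₄ : ℤ, n₁ + n₂ + n₃ + n₄ = 0 →
      ∀ m₁ m₂ m₃ m₄ : ℝ, m₄ ≤ m₃ → m₃ ≤ m₂ → m₂ ≤ m₁ →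
        ({m₁, m₂, m₃, m₄} : Multiset ℝ) = {jb n₁, jb n₂, jb n₃, jb n₄} →
        ‖PsiV s N V n₁ n₂ n₃ n₄‖ ≤
          C * L1normR V * m₁ ^ (-(2:ℝ)) * thetaR s N m₁ * thetaR s N m₂ * m₃ * m₄ := by
  obtain ⟨C, hC, hbound⟩ := Psi_pointwise_bound_general s (by linarith)
  exact ⟨C, hC, fun N hN => hbound N (by linarith)⟩
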